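/- arXiv:1805.02072 — 4 statements merged into one kernel-verified Lean document; each statement's English description precedes it below -/
import Mathlib

section
/- For every natural number n, h(n) ≤ (n³ − n)/24. -/
/-- The recurrence defining the sequence `h` of the iterated threepartite construction:
`h 0 = h 1 = h 2 = 0` and for `n >= 3`, `h n` is the maximum of
`a*b*c + h a + h b + h c` over `a + b + c = n` with `0 <= a, b, c <= n - 1`. -/
def HRec (h : ℕ → ℕ) : Prop :=
  h 0 = 0 ∧ h 1 = 0 ∧ h 2 = 0 ∧
  ∀ n, 3 ≤ n → IsGreatest
    {m | ∃ a b c : ℕ, a + b + c = n ∧ a ≤ n - 1 ∧ b ≤ n - 1 ∧ c ≤ n - 1 ∧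
      m = a * b * c + h a + h b + h c} (h n)

/-! By induction, `24 * h n + n ≤ n ^ 3`. The term `n` is additive over a split `n = a + b + c`, so
the induction step reduces to `24abc + a³ + b³ + c³ ≤ (a + b + c)³`. Since
`(a + b + c)³ - a³ - b³ - c³ = 3(a + b)(b + c)(c + a)`, this is `8abc ≤ (a + b)(b + c)(c + a)`. -/

section CommSemiring

variable {R : Type*} [CommSemiring R] [LinearOrder R] [IsStrictOrderedRing R] [ExistsAddOfLE R]

theorem eight_mul_le_add_mul_add_mul_add {a b c : R} (ha : 0 ≤ a) (hb : 0 ≤ b) (hc : 0 ≤ c) :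
    8 * (a * b * c) ≤ (a + b) * (b + c) * (c + a) :=
  calc
    8 * (a * b * c) = a * (2 * b * c) + b * (2 * c * a) + c * (2 * a * b) + 2 * (a * b * c) := by
      ring
    _ ≤ a * (b ^ 2 + c ^ 2) + b * (c ^ 2 + a ^ 2) + c * (a ^ 2 + b ^ 2) + 2 * (a * b * c) := by
      gcongr <;> exact two_mul_le_add_sq _ _
    _ = (a + b) * (b + c) * (c + a) := by ring

theorem twentyFour_mul_add_pow_three_le_add_pow_three {a b c : R}
    (ha : 0 ≤ a) (hb : 0 ≤ b) (hc : 0 ≤ c) :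
    24 * (a * b * c) + (a ^ 3 + b ^ 3 + c ^ 3) ≤ (a + b + c) ^ 3 :=
  calc
    24 * (a * b * c) + (a ^ 3 + b ^ 3 + c ^ 3)
        = 3 * (8 * (a * b * c)) + (a ^ 3 + b ^ 3 + c ^ 3) := by ring
    _ ≤ 3 * ((a + b) * (b + c) * (c + a)) + (a ^ 3 + b ^ 3 + c ^ 3) := by
      gcongr 3 * ?_ + _
      exact eight_mul_le_add_mul_add_mul_add ha hb hc
    _ = (a + b + c) ^ 3 := by ring

theorem stmt_0_general {h : ℕ → R} (h_small : ∀ n < 3, h n ≤ 0)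
    (h_split : ∀ n, 3 ≤ n → ∃ a b c : ℕ, a + b + c = n ∧ a < n ∧ b < n ∧ c < n ∧
      h n ≤ a * b * c + h a + h b + h c) (n : ℕ) :
    24 * h n + n ≤ (n : R) ^ 3 := by
  induction n using Nat.strong_induction_on with
  | _ n ih =>
    rcases lt_or_ge n 3 with hn | hn
    · calc
        24 * h n + n ≤ 24 * 0 + n := by
          gcongr
          exact h_small n hn
        _ = n := by ring
        _ ≤ (n : R) ^ 3 := mod_cast Nat.le_self_pow three_ne_zero n
    · obtain ⟨a, b, c, rfl, ha, hb, hc, h_le⟩ := h_split n hn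
      calc
        24 * h (a + b + c) + (a + b + c : ℕ)
            ≤ 24 * (a * b * c + h a + h b + h c) + (a + b + c : ℕ) := by gcongr
        _ = 24 * (a * b * c) + ((24 * h a + a) + (24 * h b + b) + (24 * h c + c)) := by
          push_cast
          ring
        _ ≤ 24 * (a * b * c) + ((a : R) ^ 3 + (b : R) ^ 3 + (c : R) ^ 3) := by
          gcongr
          exacts [ih a ha, ih b hb, ih c hc]
        _ ≤ ((a + b + c : ℕ) : R) ^ 3 := by
          push_cast
          exact twentyFour_mul_add_pow_three_le_add_pow_three
            a.cast_nonneg b.cast_nonneg c.cast_nonneg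

end CommSemiring

namespace HRec

variable {h : ℕ → ℕ} {n : ℕ}

theorem eq_zero_of_lt_three (hrec : HRec h) (hn : n < 3) : h n = 0 := by
  obtain ⟨h_zero, h_one, h_two, -⟩ := hrec
  interval_cases n <;> assumption

theorem exists_split (hrec : HRec h) (hn : 3 ≤ n) :
    ∃ a b c : ℕ, a + b + c = n ∧ a < n ∧ b < n ∧ c < n ∧
      h n ≤ a * b * c + h a + h b + h c := by
  obtain ⟨-, -, -, h_max⟩ := hrec
  obtain ⟨a, b, c, h_sum, ha, hb, hc, h_eq⟩ := (h_max n hn).1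
  exact ⟨a, b, c, h_sum, by lia, by lia, by lia, h_eq.le⟩

end HRec

/-- For every natural number `n`, `h n ≤ (n³ - n) / 24`. -/
theorem stmt_0 (h : ℕ → ℕ) (hrec : HRec h) : ∀ n : ℕ, 24 * h n ≤ n ^ 3 - n :=
  fun n ↦ Nat.le_sub_of_add_le <|
    stmt_0_general (fun _ hm ↦ (hrec.eq_zero_of_lt_three hm).le) (fun _ ↦ hrec.exists_split) n
end

section
/- For every integer n ≥ 3, h(n) = (n³ − n)/24 holds if and only if n is a power of 3. -/
/-!
Let `D n = n³ - n - 24 h n`. The identity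
`(a + b + c)³ = a³ + b³ + c³ + 24abc + 3 (a (b - c)² + b (c - a)² + c (a - b)²)`
shows that at an optimal split `n = a + b + c` the value `D n` exceeds `D a + D b + D c` by a
nonnegative term, which for a split with at least two nonzero parts vanishes only when
`a = b = c`. Hence `D ≥ 0`, and `D n = 0` forces `n = 3a` with `D a = 0`, so that descent leads to a
power of `3`. Conversely, the equal split shows `D (3m) ≤ 3 D m`, and `D 1 = 0`.
-/

/-- The symmetric cubic form measuring how far a split `a + b + c` is from being balanced. It is
the correction term in `cube_add_add`. -/
def imbalance {R : Type*} [CommRing R] (a b c : R) : R :=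
  a * (b - c) ^ 2 + b * (c - a) ^ 2 + c * (a - b) ^ 2

theorem cube_add_add {R : Type*} [CommRing R] (a b c : R) :
    (a + b + c) ^ 3 = a ^ 3 + b ^ 3 + c ^ 3 + 24 * (a * b * c) + 3 * imbalance a b c := by
  unfold imbalance
  ring

theorem imbalance_self {R : Type*} [CommRing R] (a : R) : imbalance a a a = 0 := by
  simp [imbalance]

section OrderedRing

variable {R : Type*} [CommRing R] [LinearOrder R] [IsStrictOrderedRing R] {a b c : R}

theorem imbalance_nonneg (ha : 0 ≤ a) (hb : 0 ≤ b) (hc : 0 ≤ c) : 0 ≤ imbalance a b c := by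
  unfold imbalance
  positivity

theorem eq_and_eq_of_imbalance_eq_zero (ha : 0 ≤ a) (hb : 0 ≤ b) (hc : 0 ≤ c)
    (hbc : 0 < b + c) (hca : 0 < c + a) (hab : 0 < a + b) (h : imbalance a b c = 0) :
    a = b ∧ a = c := by
  have ha' : 0 ≤ a * (b - c) ^ 2 := by positivity
  have hb' : 0 ≤ b * (c - a) ^ 2 := by positivity
  have hc' : 0 ≤ c * (a - b) ^ 2 := by positivity
  unfold imbalance at h
  have b_eq_zero_or : b = 0 ∨ c = a := by
    simpa [sub_eq_zero] using (show b * (c - a) ^ 2 = 0 by linarith)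
  have c_eq_zero_or : c = 0 ∨ a = b := by
    simpa [sub_eq_zero] using (show c * (a - b) ^ 2 = 0 by linarith)
  rcases b_eq_zero_or with rfl | rfl <;> rcases c_eq_zero_or with rfl | rfl <;> simp_all

end OrderedRing

/-- The amount `n³ - n - 24 h n` by which `24 h n` falls short of `n³ - n`. It is integer-valued,
so that the subtractions are genuine. -/
def deficit (h : ℕ → ℕ) (n : ℕ) : ℤ :=
  (n : ℤ) ^ 3 - n - 24 * h n

theorem deficit_eq_zero_iff {h : ℕ → ℕ} {n : ℕ} : deficit h n = 0 ↔ 24 * h n = n ^ 3 - n := by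
  have hn : n ≤ n ^ 3 := Nat.le_self_pow three_ne_zero n
  unfold deficit
  zify [hn]
  constructor <;> intro <;> linarith

theorem deficit_add_add (h : ℕ → ℕ) (a b c : ℕ) :
    deficit h (a + b + c) =
      deficit h a + deficit h b + deficit h c + 3 * imbalance (a : ℤ) b c
        - 24 * (h (a + b + c) - (a * b * c + h a + h b + h c : ℕ)) := by
  unfold deficit
  push_cast
  linear_combination cube_add_add (a : ℤ) b c

namespace HRec

variable {h : ℕ → ℕ} {n : ℕ}

theorem exists_deficit_eq (hrec : HRec h) (hn : 3 ≤ n) :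
    ∃ a b c : ℕ, a + b + c = n ∧ 0 < b + c ∧ 0 < c + a ∧ 0 < a + b ∧
      deficit h n =
        deficit h a + deficit h b + deficit h c + 3 * imbalance (a : ℤ) b c := by
  obtain ⟨-, -, -, hmax⟩ := hrec
  obtain ⟨a, b, c, rfl, ha, hb, hc, hsplit⟩ := (hmax n hn).1
  refine ⟨a, b, c, rfl, by lia, by lia, by lia, ?_⟩
  rw [deficit_add_add, hsplit, sub_self, mul_zero, sub_zero]

theorem deficit_nonneg (hrec : HRec h) (n : ℕ) : 0 ≤ deficit h n := by
  induction n using Nat.strong_induction_on with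
  | _ n ih =>
    obtain hn | hn := lt_or_ge n 3
    · obtain ⟨h0, h1, h2, -⟩ := hrec
      interval_cases n <;> simp [deficit, h0, h1, h2]
    · obtain ⟨a, b, c, hsum, hbc, hca, hab, hdeficit⟩ := hrec.exists_deficit_eq hn
      have ha := ih a (by lia)
      have hb := ih b (by lia)
      have hc := ih c (by lia)
      have himb : 0 ≤ imbalance (a : ℤ) b c :=
        imbalance_nonneg a.cast_nonneg b.cast_nonneg c.cast_nonneg
      linarith

theorem exists_eq_three_mul_of_deficit_eq_zero (hrec : HRec h) (hn : 3 ≤ n)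
    (hzero : deficit h n = 0) : ∃ m, n = 3 * m ∧ deficit h m = 0 := by
  obtain ⟨a, b, c, hsum, hbc, hca, hab, hdeficit⟩ := hrec.exists_deficit_eq hn
  have ha := hrec.deficit_nonneg a
  have hb := hrec.deficit_nonneg b
  have hc := hrec.deficit_nonneg c
  have himb : 0 ≤ imbalance (a : ℤ) b c :=
    imbalance_nonneg a.cast_nonneg b.cast_nonneg c.cast_nonneg
  obtain ⟨hab', hac'⟩ : (a : ℤ) = b ∧ (a : ℤ) = c :=
    eq_and_eq_of_imbalance_eq_zero a.cast_nonneg b.cast_nonneg c.cast_nonneg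
      (mod_cast hbc) (mod_cast hca) (mod_cast hab) (by linarith)
  exact ⟨a, by lia, by linarith⟩

theorem exists_eq_three_pow_of_deficit_eq_zero (hrec : HRec h) (hn : n ≠ 0)
    (hzero : deficit h n = 0) : ∃ k, n = 3 ^ k := by
  induction n using Nat.strong_induction_on with
  | _ n ih =>
    obtain hlt | hle := lt_or_ge n 3
    · obtain ⟨-, -, h2, -⟩ := hrec
      interval_cases n
      · contradiction
      · exact ⟨0, rfl⟩
      · simp [deficit, h2] at hzero
    · obtain ⟨m, rfl, hm⟩ := hrec.exists_eq_three_mul_of_deficit_eq_zero hle hzero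
      obtain ⟨k, rfl⟩ := ih m (by lia) (by lia) hm
      exact ⟨k + 1, (pow_succ' 3 k).symm⟩

theorem deficit_three_mul_le (hrec : HRec h) (hn : n ≠ 0) :
    deficit h (3 * n) ≤ 3 * deficit h n := by
  obtain ⟨-, -, -, hmax⟩ := hrec
  have hsum : 3 * n = n + n + n := by ring
  have hsplit : n * n * n + h n + h n + h n ≤ h (n + n + n) :=
    (hmax (n + n + n) (by lia)).2 ⟨n, n, n, rfl, by lia, by lia, by lia, rfl⟩
  rw [hsum, deficit_add_add, imbalance_self]
  zify at hsplit ⊢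
  linarith

theorem deficit_three_pow (hrec : HRec h) (k : ℕ) : deficit h (3 ^ k) = 0 := by
  refine le_antisymm ?_ (hrec.deficit_nonneg _)
  induction k with
  | zero => simp [deficit]
  | succ k ih =>
    calc deficit h (3 ^ (k + 1))
        = deficit h (3 * 3 ^ k) := by rw [pow_succ']
      _ ≤ 3 * deficit h (3 ^ k) := hrec.deficit_three_mul_le (by positivity)
      _ ≤ 0 := by linarith

end HRec

/-- For every integer `n ≥ 3`, `h n = (n³ - n) / 24` holds iff `n` is a power of `3`. -/
theorem stmt_1 (h : ℕ → ℕ) (hrec : HRec h) :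
    ∀ n : ℕ, 3 ≤ n → (24 * h n = n ^ 3 - n ↔ ∃ k : ℕ, n = 3 ^ k) := by
  intro n hn
  rw [← deficit_eq_zero_iff]
  constructor
  · exact hrec.exists_eq_three_pow_of_deficit_eq_zero (by lia)
  · rintro ⟨k, rfl⟩
    exact hrec.deficit_three_pow k
end

section
/- There exists an absolute constant C > 0 such that for all integers n ≥ 2, h(n) > n³/24 − C·n·log n. -/
/-!
Since `(a + b + c)³ - a³ - b³ - c³ = 24abc + 3(a(b - c)² + b(c - a)² + c(a - b)²)`, splitting `n`
into three parts that pairwise differ by at most one reproduces `n³ / 24` up to an error of at most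
`n / 8`. For `n ≥ 3` the three parts are at most `n / 2`, so there are at most `log₂ n` levels of
splitting, and the errors of one level add up to at most `n / 8`. Hence
`n³ / 24 - (n / 8) log₂ n - n / 24` is a subsolution of the recurrence, and induction places it
below `h n`.
-/

/-- A supersolution of the recurrence `HRec`: a real sequence, nonnegative at `0, 1, 2`, that
dominates the value of every split into three smaller parts without necessarily attaining any. -/
structure IsSupersolution (h : ℕ → ℝ) : Prop where
  nonneg_of_lt_three : ∀ n < 3, 0 ≤ h n
  split_le : ∀ n, 3 ≤ n → ∀ a b c : ℕ, a + b + c = n → a < n → b < n → c < n →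
    a * b * c + h a + h b + h c ≤ h n

theorem HRec.isSupersolution {h : ℕ → ℕ} (hrec : HRec h) :
    IsSupersolution fun n ↦ (h n : ℝ) where
  nonneg_of_lt_three _ _ := Nat.cast_nonneg _
  split_le n hn a b c hsum ha hb hc := by
    obtain ⟨-, -, -, hmax⟩ := hrec
    exact_mod_cast (hmax n hn).2 ⟨a, b, c, hsum, by omega, by omega, by omega, rfl⟩

theorem IsSupersolution.ge_of_exists_split {h f : ℕ → ℝ} (hh : IsSupersolution h)
    (hf_base : ∀ n < 3, f n ≤ 0)
    (hf_split : ∀ n, 3 ≤ n → ∃ a b c : ℕ, a + b + c = n ∧ a < n ∧ b < n ∧ c < n ∧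
      f n ≤ a * b * c + f a + f b + f c) (n : ℕ) :
    f n ≤ h n := by
  induction n using Nat.strong_induction_on with
  | _ n ih =>
    rcases lt_or_ge n 3 with hn | hn
    · exact (hf_base n hn).trans (hh.nonneg_of_lt_three n hn)
    · obtain ⟨a, b, c, hsum, ha, hb, hc, hle⟩ := hf_split n hn
      calc f n ≤ a * b * c + f a + f b + f c := hle
        _ ≤ a * b * c + h a + h b + h c := by gcongr <;> apply ih <;> assumption
        _ ≤ h n := hh.split_le n hn a b c hsum ha hb hc

theorem add_add_pow_three {R : Type*} [CommRing R] (a b c : R) :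
    (a + b + c) ^ 3 = 24 * (a * b * c) + a ^ 3 + b ^ 3 + c ^ 3 +
      3 * (a * (b - c) ^ 2 + b * (c - a) ^ 2 + c * (a - b) ^ 2) := by
  ring

theorem add_add_pow_three_le {R : Type*} [CommRing R] [LinearOrder R] [IsStrictOrderedRing R]
    {a b c : R} (ha : 0 ≤ a) (hb : 0 ≤ b) (hc : 0 ≤ c)
    (hbc : |b - c| ≤ 1) (hca : |c - a| ≤ 1) (hab : |a - b| ≤ 1) :
    (a + b + c) ^ 3 ≤ 24 * (a * b * c) + a ^ 3 + b ^ 3 + c ^ 3 + 3 * (a + b + c) := by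
  have ha_err := mul_le_of_le_one_right ha ((sq_le_one_iff_abs_le_one _).2 hbc)
  have hb_err := mul_le_of_le_one_right hb ((sq_le_one_iff_abs_le_one _).2 hca)
  have hc_err := mul_le_of_le_one_right hc ((sq_le_one_iff_abs_le_one _).2 hab)
  rw [add_add_pow_three]
  gcongr

theorem mul_logb_le_of_mul_le {β x y : ℝ} (hβ : 1 < β) (hx : 0 ≤ x) (hxy : β * x ≤ y) :
    x * Real.logb β x ≤ x * (Real.logb β y - 1) := by
  rcases hx.eq_or_lt with rfl | hx_pos
  · simp
  have hβ_pos : 0 < β := one_pos.trans hβ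
  have hlog : 1 + Real.logb β x ≤ Real.logb β y := by
    calc 1 + Real.logb β x = Real.logb β (β * x) := by
          rw [Real.logb_mul hβ_pos.ne' hx_pos.ne', Real.logb_self_eq_one hβ]
      _ ≤ Real.logb β y := Real.logb_le_logb_of_le hβ (by positivity) hxy
  gcongr
  linarith

/-- The explicit subsolution of the recurrence. The term `x / 24` makes it vanish at `1` and `2`,
where the recurrence starts. -/
noncomputable def cubicSubsolution (x : ℝ) : ℝ :=
  x ^ 3 / 24 - x * Real.logb 2 x / 8 - x / 24

theorem cubicSubsolution_eq_zero_of_lt_three {n : ℕ} (hn : n < 3) : cubicSubsolution n = 0 := by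
  interval_cases n <;> norm_num [cubicSubsolution]

theorem cubicSubsolution_add_add_le {a b c : ℝ} (ha : 0 ≤ a) (hb : 0 ≤ b) (hc : 0 ≤ c)
    (hbc : |b - c| ≤ 1) (hca : |c - a| ≤ 1) (hab : |a - b| ≤ 1)
    (ha_half : 2 * a ≤ a + b + c) (hb_half : 2 * b ≤ a + b + c) (hc_half : 2 * c ≤ a + b + c) :
    cubicSubsolution (a + b + c) ≤
      a * b * c + cubicSubsolution a + cubicSubsolution b + cubicSubsolution c := by
  have hcube := add_add_pow_three_le ha hb hc hbc hca hab
  have ha_log := mul_logb_le_of_mul_le one_lt_two ha ha_half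
  have hb_log := mul_logb_le_of_mul_le one_lt_two hb hb_half
  have hc_log := mul_logb_le_of_mul_le one_lt_two hc hc_half
  unfold cubicSubsolution
  linarith

theorem exists_split_cubicSubsolution_le (n : ℕ) (hn : 3 ≤ n) :
    ∃ a b c : ℕ, a + b + c = n ∧ a < n ∧ b < n ∧ c < n ∧
      cubicSubsolution n ≤
        a * b * c + cubicSubsolution a + cubicSubsolution b + cubicSubsolution c := by
  obtain ⟨a, b, c, hsum, hab, hbc, hca⟩ :
      ∃ a b c : ℕ, a + b + c = n ∧ a ≤ b ∧ b ≤ c ∧ c ≤ a + 1 :=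
    ⟨n / 3, (n + 1) / 3, (n + 2) / 3, by omega, by omega, by omega, by omega⟩
  refine ⟨a, b, c, hsum, by omega, by omega, by omega, ?_⟩
  have hsum_cast : (n : ℝ) = a + b + c := by exact_mod_cast hsum.symm
  have hab_cast : (a : ℝ) ≤ b := by exact_mod_cast hab
  have hbc_cast : (b : ℝ) ≤ c := by exact_mod_cast hbc
  have hca_cast : (c : ℝ) ≤ a + 1 := by exact_mod_cast hca
  have hc_half : (2 : ℝ) * c ≤ a + b + c := by
    have : 2 * c ≤ a + b + c := by omega
    exact_mod_cast this
  have hbc_abs : |(b : ℝ) - c| ≤ 1 := abs_le.2 ⟨by linarith, by linarith⟩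
  have hca_abs : |(c : ℝ) - a| ≤ 1 := abs_le.2 ⟨by linarith, by linarith⟩
  have hab_abs : |(a : ℝ) - b| ≤ 1 := abs_le.2 ⟨by linarith, by linarith⟩
  rw [hsum_cast]
  exact cubicSubsolution_add_add_le a.cast_nonneg b.cast_nonneg c.cast_nonneg
    hbc_abs hca_abs hab_abs (by linarith) (by linarith) hc_half

theorem IsSupersolution.cubicSubsolution_le {h : ℕ → ℝ} (hh : IsSupersolution h) (n : ℕ) :
    cubicSubsolution n ≤ h n :=
  hh.ge_of_exists_split (f := fun n ↦ cubicSubsolution n)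
    (fun _ hn ↦ (cubicSubsolution_eq_zero_of_lt_three hn).le) exists_split_cubicSubsolution_le n

theorem sub_mul_log_lt_cubicSubsolution {x : ℝ} (hx : 2 ≤ x) :
    x ^ 3 / 24 - 1 / (4 * Real.log 2) * x * Real.log x < cubicSubsolution x := by
  have hlog : 1 ≤ Real.logb 2 x := by
    rwa [Real.le_logb_iff_rpow_le one_lt_two (by linarith), Real.rpow_one]
  have hmul : x ≤ x * Real.logb 2 x := le_mul_of_one_le_right (by linarith) hlog
  have hconst : 1 / (4 * Real.log 2) * x * Real.log x = x * Real.logb 2 x / 4 := by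
    rw [Real.logb]
    ring
  rw [hconst, cubicSubsolution]
  linarith

theorem stmt_2_general :
    ∃ C : ℝ, 0 < C ∧ ∀ h : ℕ → ℝ, IsSupersolution h → ∀ n : ℕ, 2 ≤ n →
      (n : ℝ) ^ 3 / 24 - C * n * Real.log n < h n :=
  ⟨1 / (4 * Real.log 2), by positivity, fun _ hh n hn ↦
    (sub_mul_log_lt_cubicSubsolution (by exact_mod_cast hn)).trans_le (hh.cubicSubsolution_le n)⟩

/-- There is an absolute constant `C > 0` such that `h n > n³/24 - C·n·log n` for all `n ≥ 2`. -/
theorem stmt_2 (h : ℕ → ℕ) (hrec : HRec h) :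
    ∃ C : ℝ, 0 < C ∧ ∀ n : ℕ, 2 ≤ n →
      (n : ℝ) ^ 3 / 24 - C * n * Real.log n < (h n : ℝ) := by
  obtain ⟨C, hC, hbound⟩ := stmt_2_general
  exact ⟨C, hC, hbound _ hrec.isSupersolution⟩
end

section
/- For every non-degenerate triangle T in the plane, every ε > 0, and every natural number n, h(n, T, ε) ≥ h(n). -/
open EuclideanGeometry

noncomputable section

abbrev Plane := EuclideanSpace ℝ (Fin 2)

/-- A triple of points is a (non-degenerate) triangle if its points are not collinear. -/
def IsTriangle (p : Fin 3 → Plane) : Prop := ¬ Collinear ℝ (Set.range p)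

/-- The angle of the triple `p` at its `i`-th vertex. -/
noncomputable def triAngle (p : Fin 3 → Plane) (i : Fin 3) : ℝ :=
  EuclideanGeometry.angle (p (i + 1)) (p i) (p (i + 2))

/-- `p` is ε-similar to `T`: some correspondence of vertices makes corresponding
angles differ by less than ε. -/
def EpsSimilar (ε : ℝ) (p T : Fin 3 → Plane) : Prop :=
  ∃ σ : Equiv.Perm (Fin 3), ∀ i, |triAngle p i - triAngle T (σ i)| < ε

/-- The finite set `S` forms a triangle ε-similar to `T`. -/
def FormsSimilar (ε : ℝ) (T : Fin 3 → Plane) (S : Finset Plane) : Prop :=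
  ∃ p : Fin 3 → Plane, (S : Set Plane) = Set.range p ∧ IsTriangle p ∧ EpsSimilar ε p T

/-- The number of 3-element subsets of `P` forming a triangle ε-similar to `T`. -/
noncomputable def simCount (ε : ℝ) (T : Fin 3 → Plane) (P : Finset Plane) : ℕ :=
  Set.ncard {S : Finset Plane | S ⊆ P ∧ S.card = 3 ∧ FormsSimilar ε T S}

/-- `hGeo n T ε` = maximum over `n`-point sets `P` of the number of 3-element
subsets of `P` forming a triangle ε-similar to `T`. -/
noncomputable def hGeo (n : ℕ) (T : Fin 3 → Plane) (ε : ℝ) : ℕ :=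
  sSup {m | ∃ P : Finset Plane, P.card = n ∧ simCount ε T P = m}

/-!
Take optimal configurations of sizes `a`, `b`, `c`, and shrink them by homotheties centred at the
three vertices of `T`. Homotheties preserve angles, so no similar triple inside a configuration is
lost. The angles and the non-degeneracy of a triangle are stable under small perturbations of its
vertices, so once the copies are small enough, every choice of one point from each copy is a new
triple similar to `T`. This gives `a * b * c` further triples, which is the recurrence for `h`.
-/

section

open Filter Finset Function Topology

theorem pairwise_disjoint_of_forall_injective {ι α : Type*} {U : ι → Set α}
    (hU : ∀ i, (U i).Nonempty) (hinj : ∀ p : ι → α, (∀ i, p i ∈ U i) → Injective p) :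
    Pairwise (Disjoint on U) := by
  classical
  intro i j hij
  refine Set.disjoint_left.2 fun x hxi hxj => hij ?_
  choose q hq using hU
  refine hinj (update (update q i x) j x) (fun k => ?_) (by simp [hij])
  rcases eq_or_ne k j with rfl | hkj
  · simpa using hxj
  rcases eq_or_ne k i with rfl | hki
  · simpa [hkj] using hxi
  · simpa [hkj, hki] using hq k

section Transversals

variable {ι α : Type*} [Fintype ι] [DecidableEq ι] [DecidableEq α] {A : ι → Finset α}

/-- The sets obtained by choosing one element from each member of the family `A`. -/
def transversals (A : ι → Finset α) : Finset (Finset α) :=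
  (Fintype.piFinset A).image fun p => univ.image p

theorem card_transversals (hA : Pairwise (Disjoint on A)) : #(transversals A) = ∏ i, #(A i) := by
  rw [transversals, card_image_of_injOn, Fintype.card_piFinset]
  intro p hp q hq (hpq : univ.image p = univ.image q)
  rw [mem_coe, Fintype.mem_piFinset] at hp hq
  ext1 i
  obtain ⟨j, -, hj⟩ := mem_image.1 (hpq ▸ mem_image_of_mem p (mem_univ i))
  have hij : i = j := by
    by_contra hne
    exact disjoint_left.1 (hA hne) (hp i) (hj ▸ hq j)
  rw [← hj, hij]

theorem disjoint_transversals_powerset [Nontrivial ι] (hA : Pairwise (Disjoint on A)) (i : ι) :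
    Disjoint (transversals A) (A i).powerset := by
  refine disjoint_left.2 fun S hS hSi => ?_
  obtain ⟨p, hp, rfl⟩ := mem_image.1 hS
  obtain ⟨j, hji⟩ := exists_ne i
  have hpj : p j ∈ A i := mem_powerset.1 hSi (mem_image_of_mem p (mem_univ j))
  exact disjoint_left.1 (hA hji) (Fintype.mem_piFinset.1 hp j) hpj

end Transversals

section Triangles

variable {ε : ℝ} {T p : Fin 3 → Plane}

theorem IsTriangle.affineIndependent (hp : IsTriangle p) : AffineIndependent ℝ p :=
  affineIndependent_iff_not_collinear.2 hp

theorem IsTriangle.injective (hp : IsTriangle p) : Injective p :=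
  hp.affineIndependent.injective

theorem IsTriangle.eventually_isTriangle (hT : IsTriangle T) : ∀ᶠ p in 𝓝 T, IsTriangle p :=
  (isOpen_setOfPred_affineIndependent.eventually_mem hT.affineIndependent).mono
    fun _ => affineIndependent_iff_not_collinear.1

theorem IsTriangle.continuousAt_triAngle (hT : IsTriangle T) (i : Fin 3) :
    ContinuousAt (fun p => triAngle p i) T := by
  have hne₁ : T (i + 1) ≠ T i := hT.injective.ne (by simp)
  have hne₂ : T (i + 2) ≠ T i := hT.injective.ne (by simp)
  exact (continuousAt_angle (x := (T (i + 1), T i, T (i + 2))) hne₁ hne₂).comp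
    (f := fun p : Fin 3 → Plane => (p (i + 1), p i, p (i + 2))) (by fun_prop)

theorem IsTriangle.eventually_epsSimilar (hT : IsTriangle T) (hε : 0 < ε) :
    ∀ᶠ p in 𝓝 T, EpsSimilar ε p T := by
  have hclose : ∀ᶠ p in 𝓝 T, ∀ i, |triAngle p i - triAngle T i| < ε :=
    eventually_all.2 fun i => Metric.tendsto_nhds.1 (hT.continuousAt_triAngle i) ε hε
  exact hclose.mono fun p hp => ⟨Equiv.refl _, hp⟩

theorem IsTriangle.exists_forall_mem_ball_epsSimilar (hT : IsTriangle T) (hε : 0 < ε) :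
    ∃ δ > 0, ∀ p : Fin 3 → Plane, (∀ i, p i ∈ Metric.ball (T i) δ) →
      IsTriangle p ∧ EpsSimilar ε p T := by
  obtain ⟨δ, hδ, hball⟩ :=
    Metric.eventually_nhds_iff.1 (hT.eventually_isTriangle.and (hT.eventually_epsSimilar hε))
  exact ⟨δ, hδ, fun p hp => hball ((dist_pi_lt_iff hδ).2 hp)⟩

theorem IsTriangle.homothety_comp (hp : IsTriangle p) (c : Plane) {r : ℝ} (hr : r ≠ 0) :
    IsTriangle (AffineMap.homothety c r ∘ p) :=
  affineIndependent_iff_not_collinear.1 <|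
    hp.affineIndependent.map' _ (AffineMap.homothety_injective c hr)

theorem triAngle_homothety_comp (p : Fin 3 → Plane) (c : Plane) {r : ℝ} (hr : r ≠ 0) (i : Fin 3) :
    triAngle (AffineMap.homothety c r ∘ p) i = triAngle p i :=
  angle_homothety c _ _ _ hr

theorem FormsSimilar.image_homothety {S : Finset Plane} (hS : FormsSimilar ε T S) (c : Plane)
    {r : ℝ} (hr : r ≠ 0) : FormsSimilar ε T (S.image (AffineMap.homothety c r)) := by
  obtain ⟨p, hSp, hp, σ, hσ⟩ := hS
  refine ⟨AffineMap.homothety c r ∘ p, ?_, hp.homothety_comp c hr, σ, fun i => ?_⟩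
  · rw [coe_image, hSp, Set.range_comp]
  · rw [triAngle_homothety_comp p c hr]
    exact hσ i

end Triangles

section Counting

variable {ε : ℝ} {T : Fin 3 → Plane}

open Classical in
/-- The 3-element subsets of `P` counted by `simCount`, as a finset. -/
def similarTriples (ε : ℝ) (T : Fin 3 → Plane) (P : Finset Plane) : Finset (Finset Plane) :=
  {S ∈ P.powersetCard 3 | FormsSimilar ε T S}

theorem mem_similarTriples {P S : Finset Plane} :
    S ∈ similarTriples ε T P ↔ S ⊆ P ∧ #S = 3 ∧ FormsSimilar ε T S := by
  simp only [similarTriples, mem_filter, mem_powersetCard, and_assoc]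

theorem simCount_eq_card_similarTriples (ε : ℝ) (T : Fin 3 → Plane) (P : Finset Plane) :
    simCount ε T P = #(similarTriples ε T P) := by
  rw [simCount, ← Set.ncard_coe_finset]
  congr 1
  ext S
  exact mem_similarTriples.symm

theorem similarTriples_subset_powerset (P : Finset Plane) :
    similarTriples ε T P ⊆ P.powerset :=
  fun _ hS => mem_powerset.2 (mem_similarTriples.1 hS).1

theorem similarTriples_mono {P Q : Finset Plane} (hPQ : P ⊆ Q) :
    similarTriples ε T P ⊆ similarTriples ε T Q := by
  intro S hS
  rw [mem_similarTriples] at hS ⊢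
  exact ⟨hS.1.trans hPQ, hS.2⟩

theorem disjoint_similarTriples {P Q : Finset Plane} (hPQ : Disjoint P Q) :
    Disjoint (similarTriples ε T P) (similarTriples ε T Q) := by
  refine disjoint_left.2 fun S hSP hSQ => ?_
  rw [mem_similarTriples] at hSP hSQ
  have hS : S = ∅ := disjoint_self_iff_empty S |>.1 (hPQ.mono hSP.1 hSQ.1)
  simp [hS] at hSP

theorem simCount_le_choose (ε : ℝ) (T : Fin 3 → Plane) (P : Finset Plane) :
    simCount ε T P ≤ (#P).choose 3 := by
  classical
  rw [simCount_eq_card_similarTriples, ← card_powersetCard]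
  exact card_filter_le _ _

theorem simCount_le_simCount_image_homothety (P : Finset Plane) (c : Plane) {r : ℝ} (hr : r ≠ 0) :
    simCount ε T P ≤ simCount ε T (P.image (AffineMap.homothety c r)) := by
  have hinj : Injective (AffineMap.homothety c r) := AffineMap.homothety_injective c hr
  simp only [simCount_eq_card_similarTriples]
  refine card_le_card_of_injOn (image (AffineMap.homothety c r)) (fun S hS => ?_)
    (image_injective hinj).injOn
  obtain ⟨hSP, hcard, hsim⟩ := mem_similarTriples.1 hS
  exact mem_similarTriples.2 ⟨image_subset_image hSP, by rw [card_image_of_injective S hinj, hcard],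
    hsim.image_homothety c hr⟩

theorem exists_subset_ball_simCount_le (P : Finset Plane) (c : Plane) {δ : ℝ} (hδ : 0 < δ) :
    ∃ Q : Finset Plane, (Q : Set Plane) ⊆ Metric.ball c δ ∧ #Q = #P ∧
      simCount ε T P ≤ simCount ε T Q := by
  have hsmall : ∀ᶠ r : ℝ in 𝓝[≠] 0, ∀ x ∈ P, AffineMap.homothety c r x ∈ Metric.ball c δ := by
    rw [eventually_all_finset]
    intro x _
    have hcont : Continuous fun r : ℝ => AffineMap.homothety c r x :=
      AffineMap.lineMap_continuous
    have hlim : Tendsto (fun r : ℝ => AffineMap.homothety c r x) (𝓝 0) (𝓝 c) := by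
      simpa using hcont.tendsto 0
    exact (hlim.mono_left nhdsWithin_le_nhds).eventually_mem (Metric.ball_mem_nhds c hδ)
  obtain ⟨r, hball, hr⟩ := (hsmall.and self_mem_nhdsWithin).exists
  refine ⟨P.image (AffineMap.homothety c r), ?_,
    card_image_of_injective P (AffineMap.homothety_injective c hr),
    simCount_le_simCount_image_homothety P c hr⟩
  simpa [Set.subset_def] using hball

theorem transversals_subset_similarTriples {A : Fin 3 → Finset Plane}
    (hA : ∀ p : Fin 3 → Plane, (∀ i, p i ∈ A i) → IsTriangle p ∧ EpsSimilar ε p T) :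
    transversals A ⊆ similarTriples ε T (univ.biUnion A) := by
  intro S hS
  obtain ⟨p, hp, rfl⟩ := mem_image.1 hS
  rw [Fintype.mem_piFinset] at hp
  obtain ⟨htri, hsim⟩ := hA p hp
  refine mem_similarTriples.2 ⟨?_, ?_, p, by simp, htri, hsim⟩
  · exact image_subset_iff.2 fun i hi => mem_biUnion.2 ⟨i, hi, hp i⟩
  · rw [card_image_of_injective univ htri.injective, card_univ, Fintype.card_fin]

theorem prod_card_add_sum_simCount_le {A : Fin 3 → Finset Plane} (hdisj : Pairwise (Disjoint on A))
    (hA : ∀ p : Fin 3 → Plane, (∀ i, p i ∈ A i) → IsTriangle p ∧ EpsSimilar ε p T) :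
    ∏ i, #(A i) + ∑ i, simCount ε T (A i) ≤ simCount ε T (univ.biUnion A) := by
  have hinner : univ.biUnion (fun i => similarTriples ε T (A i)) ⊆
      similarTriples ε T (univ.biUnion A) :=
    biUnion_subset.2 fun i hi => similarTriples_mono (subset_biUnion_of_mem A hi)
  have hcross : Disjoint (transversals A) (univ.biUnion fun i => similarTriples ε T (A i)) :=
    (disjoint_biUnion_right _ _ _).2 fun i _ =>
      (disjoint_transversals_powerset hdisj i).mono_right (similarTriples_subset_powerset _)
  simp only [simCount_eq_card_similarTriples]
  rw [← card_transversals hdisj,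
    ← card_biUnion fun i _ j _ hij => disjoint_similarTriples (hdisj hij),
    ← card_union_of_disjoint hcross]
  exact card_le_card (union_subset (transversals_subset_similarTriples hA) hinner)

theorem exists_prod_card_add_sum_simCount_le (hT : IsTriangle T) (hε : 0 < ε)
    (A : Fin 3 → Finset Plane) :
    ∃ P : Finset Plane, #P = ∑ i, #(A i) ∧
      ∏ i, #(A i) + ∑ i, simCount ε T (A i) ≤ simCount ε T P := by
  obtain ⟨δ, hδ, hball⟩ := hT.exists_forall_mem_ball_epsSimilar hε
  choose B hB hcard hcount using fun i =>
    exists_subset_ball_simCount_le (ε := ε) (T := T) (A i) (T i) hδ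
  have hballs : Pairwise (Disjoint on fun i => Metric.ball (T i) δ) :=
    pairwise_disjoint_of_forall_injective (fun i => Metric.nonempty_ball.2 hδ)
      fun p hp => (hball p hp).1.injective
  have hdisj : Pairwise (Disjoint on B) := fun i j hij =>
    disjoint_coe.1 ((hballs hij).mono (hB i) (hB j))
  refine ⟨univ.biUnion B, ?_, ?_⟩
  · rw [card_biUnion fun i _ j _ hij => hdisj hij]
    exact sum_congr rfl fun i _ => hcard i
  · calc ∏ i, #(A i) + ∑ i, simCount ε T (A i)
        ≤ ∏ i, #(B i) + ∑ i, simCount ε T (B i) := by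
          simp only [hcard]
          gcongr with i
          exact hcount i
      _ ≤ simCount ε T (univ.biUnion B) :=
          prod_card_add_sum_simCount_le hdisj fun p hp => hball p fun i => hB i (hp i)

end Counting

section Maximum

variable {ε : ℝ} {T : Fin 3 → Plane}

theorem bddAbove_simCount (n : ℕ) (T : Fin 3 → Plane) (ε : ℝ) :
    BddAbove {m | ∃ P : Finset Plane, #P = n ∧ simCount ε T P = m} := by
  refine ⟨n.choose 3, ?_⟩
  rintro _ ⟨P, rfl, rfl⟩
  exact simCount_le_choose ε T P

theorem simCount_le_hGeo (ε : ℝ) (T : Fin 3 → Plane) (P : Finset Plane) :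
    simCount ε T P ≤ hGeo #P T ε :=
  le_csSup (bddAbove_simCount _ T ε) ⟨P, rfl, rfl⟩

theorem exists_simCount_eq_hGeo (n : ℕ) (T : Fin 3 → Plane) (ε : ℝ) :
    ∃ P : Finset Plane, #P = n ∧ simCount ε T P = hGeo n T ε := by
  obtain ⟨P, hP⟩ := Infinite.exists_subset_card_eq Plane n
  have hne : {m | ∃ P : Finset Plane, #P = n ∧ simCount ε T P = m}.Nonempty := ⟨_, P, hP, rfl⟩
  exact Nat.sSup_mem hne (bddAbove_simCount n T ε)

theorem prod_add_sum_hGeo_le (hT : IsTriangle T) (hε : 0 < ε) (n : Fin 3 → ℕ) :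
    ∏ i, n i + ∑ i, hGeo (n i) T ε ≤ hGeo (∑ i, n i) T ε := by
  choose A hcard hcount using fun i => exists_simCount_eq_hGeo (n i) T ε
  obtain ⟨P, hP, hle⟩ := exists_prod_card_add_sum_simCount_le hT hε A
  simp only [hcard, hcount] at hP hle
  exact hle.trans (hP ▸ simCount_le_hGeo ε T P)

end Maximum

end

/-- For every non-degenerate triangle `T`, every `ε > 0` and every `n`,
`h(n, T, ε) ≥ h(n)`. -/
theorem stmt_3 (h : ℕ → ℕ) (hrec : HRec h)
    (T : Fin 3 → Plane) (hT : IsTriangle T) (ε : ℝ) (hε : 0 < ε) :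
    ∀ n : ℕ, h n ≤ hGeo n T ε := by
  intro n
  obtain ⟨h_zero, h_one, h_two, h_step⟩ := hrec
  induction n using Nat.strong_induction_on with
  | _ n ih =>
    rcases lt_or_ge n 3 with hn | hn
    · have h_n : h n = 0 := by interval_cases n <;> assumption
      exact h_n ▸ Nat.zero_le _
    · obtain ⟨a, b, c, habc, ha, hb, hc, h_n⟩ := (h_step n hn).1
      calc h n = a * b * c + h a + h b + h c := h_n
        _ ≤ a * b * c + hGeo a T ε + hGeo b T ε + hGeo c T ε := by
          gcongr <;> exact ih _ (by omega)
        _ ≤ hGeo (a + b + c) T ε := by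
          simpa [Fin.prod_univ_three, Fin.sum_univ_three, add_assoc] using
            prod_add_sum_hGeo_le hT hε ![a, b, c]
        _ = hGeo n T ε := by rw [habc]

end
end
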